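/- Let n ≥ 2, 1 ≤ s < ∞, let Ω ⊆ ℝⁿ be a domain, let T = T_{l,r,c} be an essential tube for Ω with corresponding component Ω_T, and let z₀ ∈ Ω be any point not in Ω_T. Then ∫_{Ω_T} k(z, z₀; Ω)^s dz ≥ (V_{n−1} / ((s+1)·2^{s+1})) · c · rⁿ · (l/r)^{s+1}, where V_{n−1} is the Lebesgue measure of the unit ball in ℝ^{n−1}. -/

import Mathlib

open MeasureTheory Metric Set
open scoped ENNReal

/-- The quasihyperbolic distance `k(z, z₀; Ω)`: the infimum, over all Lipschitz curves
`γ : [0,1] → Ω` joining `z` to `z₀`, of `∫ ‖γ'(t)‖ / d(γ(t), ∂Ω) dt`. -/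
noncomputable def qhDist {n : ℕ} (Ω : Set (EuclideanSpace ℝ (Fin n)))
    (z z₀ : EuclideanSpace ℝ (Fin n)) : ℝ :=
  sInf {L : ℝ | ∃ γ : ℝ → EuclideanSpace ℝ (Fin n),
    (∃ K : NNReal, LipschitzWith K γ) ∧ γ 0 = z ∧ γ 1 = z₀ ∧
    (∀ t ∈ Set.Icc (0:ℝ) 1, γ t ∈ Ω) ∧
    L = ∫ t in (0:ℝ)..1, ‖deriv γ t‖ / Metric.infDist (γ t) (frontier Ω)}

/-- The distance of `z` from the first coordinate axis. -/
noncomputable def radial {n : ℕ} [NeZero n] (z : EuclideanSpace ℝ (Fin n)) : ℝ :=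
  Real.sqrt (∑ i ∈ Finset.univ.erase (0 : Fin n), z i ^ 2)

/-- The standard cylinder `[0, l] × D_r^{n-1}` in `ℝⁿ`, the first coordinate being the axis. -/
def stdCylinder {n : ℕ} [NeZero n] (l r : ℝ) : Set (EuclideanSpace ℝ (Fin n)) :=
  {z | z 0 ∈ Set.Icc (0:ℝ) l ∧ radial z ≤ r}

/-- The wall `[0, l] × ∂D_r^{n-1}` of the standard cylinder. -/
def stdWall {n : ℕ} [NeZero n] (l r : ℝ) : Set (EuclideanSpace ℝ (Fin n)) :=
  {z | z 0 ∈ Set.Icc (0:ℝ) l ∧ radial z = r}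

/-- The `t`-th slice `{t} × D_r^{n-1}` of the standard cylinder. -/
def stdSlice {n : ℕ} [NeZero n] (r t : ℝ) : Set (EuclideanSpace ℝ (Fin n)) :=
  {z | z 0 = t ∧ radial z ≤ r}

/-- `T = φ '' stdCylinder l r` is an essential tube for `Ω` with parameters `l, r, c` and
corresponding component `ΩT`: `ΩT` is a connected component of `T ∩ Ω` missing the wall of `T`,
and each slice of `ΩT` has `(n-1)`-dimensional (Hausdorff) measure at least `c` times that of
the corresponding slice of the tube (an isometric copy of `D_r^{n-1}`). -/
structure IsEssentialTube {n : ℕ} [NeZero n] (Ω : Set (EuclideanSpace ℝ (Fin n)))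
    (φ : EuclideanSpace ℝ (Fin n) ≃ᵢ EuclideanSpace ℝ (Fin n))
    (l r c : ℝ) (ΩT : Set (EuclideanSpace ℝ (Fin n))) : Prop where
  l_pos : 0 < l
  r_pos : 0 < r
  c_pos : 0 < c
  isComp : ∃ p ∈ (φ '' stdCylinder l r) ∩ Ω,
    ΩT = connectedComponentIn ((φ '' stdCylinder l r) ∩ Ω) p
  wall_disjoint : ΩT ∩ (φ '' stdWall l r) = ∅
  slice_meas : ∀ t ∈ Set.Icc (0:ℝ) l,
    ENNReal.ofReal c * μH[(n:ℝ) - 1] (φ '' stdSlice r t) ≤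
      μH[(n:ℝ) - 1] (ΩT ∩ φ '' stdSlice r t)


/-- Lipschitz-curve joinability inside `Ω`. -/
def lipJoined {n : ℕ} (Ω : Set (EuclideanSpace ℝ (Fin n)))
    (x y : EuclideanSpace ℝ (Fin n)) : Prop :=
  ∃ γ : ℝ → EuclideanSpace ℝ (Fin n),
    (∃ K : NNReal, LipschitzWith K γ) ∧ γ 0 = x ∧ γ 1 = y ∧
    (∀ t ∈ Set.Icc (0:ℝ) 1, γ t ∈ Ω)

lemma lipJoined_trans {n : ℕ} {Ω : Set (EuclideanSpace ℝ (Fin n))}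
    {x y z : EuclideanSpace ℝ (Fin n)} (h1 : lipJoined Ω x y) (h2 : lipJoined Ω y z) :
    lipJoined Ω x z := by
  obtain ⟨γ, ⟨K, hK⟩, a0, a1, aΩ⟩ := h1
  obtain ⟨δ, ⟨L, hL⟩, b0, b1, bΩ⟩ := h2
  have hc : ∀ b : ℝ, LipschitzWith 2 (fun t : ℝ => max 0 (min 1 (2 * t - b))) := by
    intro b
    have : LipschitzWith 2 (fun t : ℝ => 2 * t - b) := by
      apply LipschitzWith.of_dist_le_mul
      intro u v
      rw [Real.dist_eq, Real.dist_eq]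
      rw [show 2 * u - b - (2 * v - b) = 2 * (u - v) by ring, abs_mul]
      simp
    exact (this.const_min 1).const_max 0
  refine ⟨fun t => γ (max 0 (min 1 (2 * t - 0))) + δ (max 0 (min 1 (2 * t - 1))) - y,
    ⟨K * 2 + L * 2 + 0, ?_⟩, ?_, ?_, ?_⟩
  · exact ((hK.comp (hc 0)).add (hL.comp (hc 1))).sub (LipschitzWith.const y)
  · norm_num [a0, b0]
  · norm_num [a1, b1]
  · intro t ht
    rcases le_total t (1/2) with h | h
    · have e1 : max 0 (min 1 (2 * t - 1)) = (0:ℝ) := by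
        rw [min_eq_right (by linarith), max_eq_left (by linarith)]
      simp only [e1, b0, add_sub_cancel_right]
      exact aΩ _ ⟨le_max_left _ _, max_le (by norm_num) (min_le_left _ _)⟩
    · have e1 : max 0 (min 1 (2 * t - 0)) = (1:ℝ) := by
        rw [min_eq_left (by linarith), max_eq_right (by linarith)]
      simp only [e1, a1, add_sub_cancel_left]
      exact bΩ _ ⟨le_max_left _ _, max_le (by norm_num) (min_le_left _ _)⟩

lemma lipJoined_symm {n : ℕ} {Ω : Set (EuclideanSpace ℝ (Fin n))}
    {x y : EuclideanSpace ℝ (Fin n)} (h1 : lipJoined Ω x y) : lipJoined Ω y x := by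
  obtain ⟨γ, ⟨K, hK⟩, a0, a1, aΩ⟩ := h1
  refine ⟨fun t => γ (1 - t), ⟨K * (0 + 1), ?_⟩, by simpa, by simpa, ?_⟩
  · exact hK.comp ((LipschitzWith.const (1:ℝ)).sub LipschitzWith.id)
  · intro t ht
    exact aΩ _ ⟨by linarith [ht.2], by linarith [ht.1]⟩

lemma lipJoined_of_domain {n : ℕ} {Ω : Set (EuclideanSpace ℝ (Fin n))}
    (hΩop : IsOpen Ω) (hΩconn : IsConnected Ω)
    {x y : EuclideanSpace ℝ (Fin n)} (hx : x ∈ Ω) (hy : y ∈ Ω) : lipJoined Ω x y := by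
  refine hΩconn.isPreconnected.induction₂ (lipJoined Ω) ?_ ?_ ?_ hx hy
  · intro x hx
    obtain ⟨ε, hε, hb⟩ := Metric.isOpen_iff.1 hΩop x hx
    apply mem_nhdsWithin_of_mem_nhds
    filter_upwards [Metric.ball_mem_nhds x hε] with y hy
    refine ⟨fun t => AffineMap.lineMap x y t, ⟨_, (lipschitzWith_lineMap x y)⟩, by simp, by simp, ?_⟩
    intro t ht
    apply hb
    exact (convex_ball x ε).lineMap_mem (Metric.mem_ball_self hε) hy ht
  · intro x y z _ _ _; exact lipJoined_trans
  · intro x y _ _; exact lipJoined_symm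

lemma dist_le_integral_deriv {n : ℕ} {γ : ℝ → EuclideanSpace ℝ (Fin n)} {K : NNReal}
    (hK : LipschitzWith K γ) {τ : ℝ} (hτ : 0 ≤ τ) :
    IntervalIntegrable (fun t => ‖deriv γ t‖) volume 0 τ ∧
    ‖γ τ - γ 0‖ ≤ ∫ t in (0:ℝ)..τ, ‖deriv γ t‖ := by
  have hint : IntervalIntegrable (fun t => ‖deriv γ t‖) volume 0 τ := by
    apply IntervalIntegrable.mono_fun (g := fun t => ‖deriv γ t‖)
      (intervalIntegrable_const (c := (K:ℝ)))
    · exact (measurable_deriv γ).norm.aestronglyMeasurable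
    · filter_upwards with t
      simpa using norm_deriv_le_of_lipschitz hK
  refine ⟨hint, ?_⟩
  set w := γ τ - γ 0 with hw
  by_cases h0 : w = 0
  · rw [h0, norm_zero]
    exact intervalIntegral.integral_nonneg hτ (fun _ _ => norm_nonneg _)
  have hLip : LipschitzWith (‖innerSL ℝ w‖₊ * K) (fun t => innerSL ℝ w (γ t)) :=
    (innerSL ℝ w).lipschitz.comp hK
  have hac := (hLip.lipschitzOnWith (s := uIcc 0 τ)).absolutelyContinuousOnInterval
  have hftc := hac.integral_deriv_eq_sub
  have h1 : innerSL ℝ w (γ τ) - innerSL ℝ w (γ 0) = ‖w‖ ^ 2 := by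
    rw [← map_sub, ← hw]; simp
  have h2 : ∫ t in (0:ℝ)..τ, deriv (fun t => innerSL ℝ w (γ t)) t
      ≤ ∫ t in (0:ℝ)..τ, ‖w‖ * ‖deriv γ t‖ := by
    apply intervalIntegral.integral_mono_ae hτ hac.intervalIntegrable_deriv (hint.const_mul _)
    filter_upwards [hK.ae_differentiableAt_real] with t ht
    have := ((innerSL ℝ w).hasFDerivAt.comp_hasDerivAt t ht.hasDerivAt).deriv
    simp only [Function.comp_def] at this
    rw [this]
    simpa using real_inner_le_norm w (deriv γ t)
  rw [hftc, h1, intervalIntegral.integral_const_mul] at h2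
  have : 0 < ‖w‖ := norm_pos_iff.2 h0
  nlinarith

/-- The point of `ℝ^{m+1}` with first coordinate `t` and remaining coordinates `w`. -/
noncomputable def axEmb {m : ℕ} (t : ℝ) (w : EuclideanSpace ℝ (Fin m)) :
    EuclideanSpace ℝ (Fin (m+1)) :=
  WithLp.toLp 2 (Fin.cons t (fun i => w i) : Fin (m+1) → ℝ)

lemma axEmb_zero {m : ℕ} (t : ℝ) (w : EuclideanSpace ℝ (Fin m)) : axEmb t w 0 = t := by
  simp [axEmb]

lemma axEmb_succ {m : ℕ} (t : ℝ) (w : EuclideanSpace ℝ (Fin m)) (i : Fin m) :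
    axEmb t w i.succ = w i := by
  simp [axEmb]

lemma exists_axEmb {m : ℕ} (z : EuclideanSpace ℝ (Fin (m+1))) :
    ∃ w : EuclideanSpace ℝ (Fin m), z = axEmb (z 0) w := by
  refine ⟨WithLp.toLp 2 (fun i => z i.succ), ?_⟩
  ext i
  refine Fin.cases ?_ (fun i => ?_) i
  · rw [axEmb_zero]
  · rw [axEmb_succ]

lemma radial_eq {m : ℕ} [NeZero (m+1)] (z : EuclideanSpace ℝ (Fin (m+1))) :
    radial z = Real.sqrt (∑ i : Fin m, z i.succ ^ 2) := by
  unfold radial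
  congr 1
  have h := Finset.add_sum_erase Finset.univ (fun i : Fin (m+1) => z i ^ 2) (Finset.mem_univ 0)
  rw [Fin.sum_univ_succ] at h
  exact add_left_cancel h

lemma radial_axEmb {m : ℕ} [NeZero (m+1)] (t : ℝ) (w : EuclideanSpace ℝ (Fin m)) :
    radial (axEmb t w) = ‖w‖ := by
  rw [radial_eq, EuclideanSpace.norm_eq]
  simp [axEmb_succ]

lemma axEmb_isometry {m : ℕ} (t : ℝ) : Isometry (axEmb (m := m) t) := by
  apply Isometry.of_dist_eq
  intro w w'
  rw [EuclideanSpace.dist_eq, EuclideanSpace.dist_eq, Fin.sum_univ_succ]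
  simp [axEmb_succ, axEmb_zero]

lemma continuous_radial {n : ℕ} [NeZero n] :
    Continuous (radial : EuclideanSpace ℝ (Fin n) → ℝ) := by
  unfold radial
  fun_prop

lemma isClosed_stdCylinder {n : ℕ} [NeZero n] (l r : ℝ) :
    IsClosed (stdCylinder l r : Set (EuclideanSpace ℝ (Fin n))) := by
  apply IsClosed.inter
  · exact isClosed_Icc.preimage (f := fun z : EuclideanSpace ℝ (Fin n) => z 0) (by fun_prop)
  · exact isClosed_le continuous_radial continuous_const

section tube

variable {n : ℕ} [NeZero n] {Ω : Set (EuclideanSpace ℝ (Fin n))}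
    {φ : EuclideanSpace ℝ (Fin n) ≃ᵢ EuclideanSpace ℝ (Fin n)} {l r c : ℝ}
    {ΩT : Set (EuclideanSpace ℝ (Fin n))}

lemma tube_closed (φ : EuclideanSpace ℝ (Fin n) ≃ᵢ EuclideanSpace ℝ (Fin n)) (l r : ℝ) :
    IsClosed (φ '' stdCylinder l r) :=
  φ.toHomeomorph.isClosedMap _ (isClosed_stdCylinder l r)

lemma IsEssentialTube.subset (hT : IsEssentialTube Ω φ l r c ΩT) :
    ΩT ⊆ (φ '' stdCylinder l r) ∩ Ω := by
  obtain ⟨p, hp, rfl⟩ := hT.isComp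
  exact connectedComponentIn_subset _ _

lemma IsEssentialTube.absorb (hT : IsEssentialTube Ω φ l r c ΩT)
    {s : Set (EuclideanSpace ℝ (Fin n))} (hs : IsPreconnected s)
    (hsub : s ⊆ (φ '' stdCylinder l r) ∩ Ω) {x : EuclideanSpace ℝ (Fin n)}
    (hx : x ∈ s) (hxT : x ∈ ΩT) : s ⊆ ΩT := by
  obtain ⟨p, hp, rfl⟩ := hT.isComp
  rw [connectedComponentIn_eq hxT]
  exact hs.subset_connectedComponentIn hx hsub

lemma IsEssentialTube.eq_closure (hT : IsEssentialTube Ω φ l r c ΩT) :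
    ΩT = closure ΩT ∩ ((φ '' stdCylinder l r) ∩ Ω) := by
  apply Subset.antisymm
  · exact subset_inter subset_closure hT.subset
  · have hne : ΩT.Nonempty := by
      obtain ⟨p, hp, rfl⟩ := hT.isComp
      exact ⟨p, mem_connectedComponentIn hp⟩
    have hpre : IsPreconnected ΩT := by
      obtain ⟨p, hp, rfl⟩ := hT.isComp
      exact isPreconnected_connectedComponentIn
    obtain ⟨x, hx⟩ := hne
    refine hT.absorb (x := x) ?_ inter_subset_right ⟨subset_closure hx, hT.subset hx⟩ hx
    exact hpre.subset_closure (subset_inter subset_closure hT.subset) inter_subset_left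

lemma IsEssentialTube.measurableSet (hT : IsEssentialTube Ω φ l r c ΩT) (hΩ : IsOpen Ω) :
    MeasurableSet ΩT := by
  rw [hT.eq_closure]
  exact isClosed_closure.measurableSet.inter ((tube_closed φ l r).measurableSet.inter hΩ.measurableSet)

/-- Points of `Ω_T` not on the ends are interior to `Ω_T`. -/
lemma IsEssentialTube.mem_nhds (hT : IsEssentialTube Ω φ l r c ΩT) (hΩ : IsOpen Ω)
    {z : EuclideanSpace ℝ (Fin n)} (hz : z ∈ ΩT) (h0 : (φ.symm z) 0 ≠ 0) (hl : (φ.symm z) 0 ≠ l) :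
    ΩT ∈ nhds z := by
  obtain ⟨⟨y, hy, rfl⟩, hzΩ⟩ := hT.subset hz
  rw [φ.symm_apply_apply] at h0 hl
  have hrad : radial y < r := by
    refine lt_of_le_of_ne hy.2 (fun h => ?_)
    have : φ y ∈ ΩT ∩ (φ '' stdWall l r) := ⟨hz, y, ⟨hy.1, h⟩, rfl⟩
    rw [hT.wall_disjoint] at this
    exact this
  set U : Set (EuclideanSpace ℝ (Fin n)) :=
    {z | 0 < (φ.symm z) 0 ∧ (φ.symm z) 0 < l ∧ radial (φ.symm z) < r} ∩ Ω with hU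
  have hcont : Continuous (fun z => (φ.symm z) 0) := by
    have := φ.symm.continuous
    fun_prop
  have hUo : IsOpen U := by
    refine IsOpen.inter ?_ hΩ
    refine (isOpen_lt continuous_const hcont).inter ((isOpen_lt hcont continuous_const).inter
      (isOpen_lt (continuous_radial.comp φ.symm.continuous) continuous_const))
  have hzU : φ y ∈ U := by
    refine ⟨⟨?_, ?_, ?_⟩, hzΩ⟩ <;> rw [φ.symm_apply_apply]
    · exact lt_of_le_of_ne hy.1.1 (Ne.symm h0)
    · exact lt_of_le_of_ne hy.1.2 hl
    · exact hrad
  have hUsub : U ⊆ (φ '' stdCylinder l r) ∩ Ω := by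
    rintro z ⟨⟨h1, h2, h3⟩, h4⟩
    exact ⟨⟨φ.symm z, ⟨⟨h1.le, h2.le⟩, h3.le⟩, φ.apply_symm_apply z⟩, h4⟩
  obtain ⟨ε, hε, hb⟩ := Metric.isOpen_iff.1 hUo _ hzU
  refine Filter.mem_of_superset (Metric.ball_mem_nhds _ hε) ?_
  exact hT.absorb (convex_ball _ _).isPreconnected (hb.trans hUsub) (Metric.mem_ball_self hε) hz

/-- A curve in `Ω` from `Ω_T` which meets no end of `Ω_T` before time `b` stays in `Ω_T`. -/
lemma IsEssentialTube.stay (hT : IsEssentialTube Ω φ l r c ΩT) (hΩ : IsOpen Ω)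
    {γ : ℝ → EuclideanSpace ℝ (Fin n)} (hγ : Continuous γ) (h0 : γ 0 ∈ ΩT) {b : ℝ}
    (hγΩ : ∀ u ∈ Icc 0 b, γ u ∈ Ω)
    (hend : ∀ u ∈ Ico 0 b, γ u ∈ ΩT → (φ.symm (γ u)) 0 ≠ 0 ∧ (φ.symm (γ u)) 0 ≠ l) :
    ∀ u ∈ Icc 0 b, γ u ∈ ΩT := by
  have key : Icc 0 b ⊆ γ ⁻¹' ΩT := by
    apply IsClosed.Icc_subset_of_forall_exists_gt
    · have : γ ⁻¹' ΩT ∩ Icc 0 b = γ ⁻¹' (closure ΩT ∩ (φ '' stdCylinder l r)) ∩ Icc 0 b := by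
        ext u
        constructor
        · rintro ⟨h1, h2⟩
          exact ⟨⟨subset_closure h1, (hT.subset h1).1⟩, h2⟩
        · rintro ⟨⟨h1, h3⟩, h2⟩
          refine ⟨?_, h2⟩
          rw [mem_preimage, hT.eq_closure]
          exact ⟨h1, h3, hγΩ u h2⟩
      rw [this]
      exact ((isClosed_closure.inter (tube_closed φ l r)).preimage hγ).inter isClosed_Icc
    · exact h0
    · rintro x ⟨hx, hxI⟩ y hy
      obtain ⟨e1, e2⟩ := hend x hxI hx
      have hn := hγ.continuousAt (hT.mem_nhds hΩ hx e1 e2)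
      have hn' : γ ⁻¹' ΩT ∈ nhdsWithin x (Ioi x) := mem_nhdsWithin_of_mem_nhds hn
      have := Filter.inter_mem hn' (Ioc_mem_nhdsGT hy)
      exact Filter.nonempty_of_mem this
  exact key

lemma IsEssentialTube.exists_exit (hT : IsEssentialTube Ω φ l r c ΩT) (hΩ : IsOpen Ω)
    {γ : ℝ → EuclideanSpace ℝ (Fin n)} (hγ : Continuous γ) (h0 : γ 0 ∈ ΩT)
    (hγΩ : ∀ u ∈ Icc (0:ℝ) 1, γ u ∈ Ω) (h1 : γ 1 ∉ ΩT) :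
    ∃ τ ∈ Icc (0:ℝ) 1, (∀ u ∈ Icc 0 τ, γ u ∈ ΩT) ∧
      ((φ.symm (γ τ)) 0 = 0 ∨ (φ.symm (γ τ)) 0 = l) := by
  set B : Set ℝ := {u | u ∈ Icc (0:ℝ) 1 ∧ γ u ∈ ΩT ∧
    ((φ.symm (γ u)) 0 = 0 ∨ (φ.symm (γ u)) 0 = l)} with hB
  have hcont : Continuous (fun u => (φ.symm (γ u)) 0) := by
    have := φ.symm.continuous
    fun_prop
  have hBne : B.Nonempty := by
    by_contra hne
    apply h1
    refine hT.stay hΩ hγ h0 hγΩ ?_ 1 (by simp)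
    intro u hu hu'
    by_contra hcon
    apply hne
    refine ⟨u, ⟨hu.1, hu.2.le⟩, hu', ?_⟩
    tauto
  have hBc : IsClosed B := by
    have : B = (Icc (0:ℝ) 1 ∩ γ ⁻¹' (closure ΩT ∩ (φ '' stdCylinder l r))) ∩
      ((fun u => (φ.symm (γ u)) 0) ⁻¹' {0, l}) := by
      ext u
      constructor
      · rintro ⟨a, b, d⟩
        exact ⟨⟨a, subset_closure b, (hT.subset b).1⟩, d⟩
      · rintro ⟨⟨a, b, b'⟩, d⟩
        refine ⟨a, ?_, d⟩
        rw [hT.eq_closure]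
        exact ⟨b, b', hγΩ u a⟩
    rw [this]
    exact (isClosed_Icc.inter ((isClosed_closure.inter (tube_closed φ l r)).preimage hγ)).inter
      ((Set.toFinite _).isClosed.preimage hcont)
  have hBk : IsCompact B := isCompact_Icc.of_isClosed_subset hBc (fun u hu => hu.1)
  obtain ⟨τ, hτ, hmin⟩ := hBk.exists_isLeast hBne
  refine ⟨τ, hτ.1, ?_, hτ.2.2⟩
  refine hT.stay hΩ hγ h0 (fun u hu => hγΩ u ⟨hu.1, hu.2.trans hτ.1.2⟩) ?_
  intro u hu hu'
  by_contra hcon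
  have : u ∈ B := ⟨⟨hu.1, hu.2.le.trans hτ.1.2⟩, hu', by tauto⟩
  exact absurd (hmin this) (not_le.2 hu.2)

end tube

lemma IsEssentialTube.exists_notMem {m : ℕ} [NeZero (m+1)] (hm : 1 ≤ m)
    {Ω : Set (EuclideanSpace ℝ (Fin (m+1)))}
    {φ : EuclideanSpace ℝ (Fin (m+1)) ≃ᵢ EuclideanSpace ℝ (Fin (m+1))} {l r c : ℝ}
    {ΩT : Set (EuclideanSpace ℝ (Fin (m+1)))} (hT : IsEssentialTube Ω φ l r c ΩT)
    {z : EuclideanSpace ℝ (Fin (m+1))} (hz : z ∈ ΩT) : ∃ p, p ∉ Ω ∧ dist z p ≤ r := by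
  obtain ⟨⟨y, hy, rfl⟩, hzΩ⟩ := hT.subset hz
  obtain ⟨w, hw⟩ := exists_axEmb y
  set t := y 0 with ht
  have hwr : ‖w‖ ≤ r := by
    have := hy.2
    rwa [hw, radial_axEmb] at this
  obtain ⟨e, he, hwe⟩ : ∃ e : EuclideanSpace ℝ (Fin m), ‖e‖ = 1 ∧ w = ‖w‖ • e := by
    by_cases h : w = 0
    · have : Nonempty (Fin m) := ⟨⟨0, hm⟩⟩
      obtain ⟨e, he⟩ := exists_norm_eq (EuclideanSpace ℝ (Fin m)) (zero_le_one (α := ℝ))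
      exact ⟨e, he, by simp [h]⟩
    · have hn : ‖w‖ ≠ 0 := norm_ne_zero_iff.2 h
      refine ⟨‖w‖⁻¹ • w, by simp [norm_smul, hn], by simp [smul_smul, hn]⟩
  by_contra hcon
  push Not at hcon
  have hf : Continuous (fun a : ℝ => φ (axEmb t (a • e))) :=
    φ.continuous.comp ((axEmb_isometry t).continuous.comp (by fun_prop))
  have hcyl : ∀ a ∈ Icc ‖w‖ r, radial (axEmb t (a • e)) = a := by
    intro a ha
    rw [radial_axEmb, norm_smul, he, mul_one, Real.norm_of_nonneg ((norm_nonneg w).trans ha.1)]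
  have hsub : (fun a : ℝ => φ (axEmb t (a • e))) '' Icc ‖w‖ r ⊆ (φ '' stdCylinder l r) ∩ Ω := by
    rintro _ ⟨a, ha, rfl⟩
    refine ⟨⟨_, ⟨?_, ?_⟩, rfl⟩, ?_⟩
    · rw [axEmb_zero]; exact hy.1
    · rw [hcyl a ha]; exact ha.2
    · by_contra hnot
      refine absurd (hcon _ hnot) (not_lt.2 ?_)
      rw [φ.dist_eq, hw, (axEmb_isometry t).dist_eq]
      nth_rw 1 [hwe]
      rw [dist_eq_norm, ← sub_smul, norm_smul, he, mul_one, Real.norm_eq_abs, abs_le]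
      have := norm_nonneg w
      constructor <;> linarith [ha.1, ha.2]
  have habs := hT.absorb (isPreconnected_Icc.image _ hf.continuousOn) hsub
    (x := φ y) ⟨‖w‖, ⟨le_rfl, hwr⟩, by simp only; rw [← hwe, ← hw]⟩ hz
  have hmem : φ (axEmb t (r • e)) ∈ ΩT ∩ (φ '' stdWall l r) := by
    refine ⟨habs ⟨r, ⟨hwr, le_rfl⟩, rfl⟩, _, ⟨?_, hcyl r ⟨hwr, le_rfl⟩⟩, rfl⟩
    rw [axEmb_zero]; exact hy.1
  rw [hT.wall_disjoint] at hmem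
  exact hmem

lemma IsEssentialTube.qhDist_ge {m : ℕ} [NeZero (m+1)] (hm : 1 ≤ m)
    {Ω : Set (EuclideanSpace ℝ (Fin (m+1)))} (hΩop : IsOpen Ω) (hΩconn : IsConnected Ω)
    {φ : EuclideanSpace ℝ (Fin (m+1)) ≃ᵢ EuclideanSpace ℝ (Fin (m+1))} {l r c : ℝ}
    {ΩT : Set (EuclideanSpace ℝ (Fin (m+1)))} (hT : IsEssentialTube Ω φ l r c ΩT)
    {z z₀ : EuclideanSpace ℝ (Fin (m+1))} (hz : z ∈ ΩT) (hz₀ : z₀ ∈ Ω) (hz₀T : z₀ ∉ ΩT)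
    (hzl : (φ.symm z) 0 ≤ l / 2) : (φ.symm z) 0 / r ≤ qhDist Ω z z₀ := by
  have hr := hT.r_pos
  unfold qhDist
  apply le_csInf
  · obtain ⟨γ, h1, h2, h3, h4⟩ := lipJoined_of_domain hΩop hΩconn (hT.subset hz).2 hz₀
    exact ⟨_, γ, h1, h2, h3, h4, rfl⟩
  rintro L ⟨γ, ⟨K, hK⟩, g0, g1, gΩ, rfl⟩
  have hγ := hK.continuous
  obtain ⟨τ, hτ, hstay, hexit⟩ := hT.exists_exit hΩop hγ (by rwa [g0]) gΩ (by rwa [g1])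
  obtain ⟨p, hp, -⟩ := hT.exists_notMem hm hz
  have hne : Ω ≠ univ := fun h => hp (h ▸ mem_univ p)
  have hfn : (frontier Ω).Nonempty := by
    obtain ⟨y, hy, -⟩ := exists_mem_frontier_infDist_compl_eq_dist hz₀ hne
    exact ⟨y, hy⟩
  have hpos : ∀ x ∈ Ω, 0 < infDist x (frontier Ω) := by
    intro x hx
    refine (isClosed_frontier.notMem_iff_infDist_pos hfn).1 (fun h => ?_)
    rw [hΩop.frontier_eq] at h
    exact h.2 hx
  have hle : ∀ x ∈ ΩT, infDist x (frontier Ω) ≤ r := by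
    intro x hx
    obtain ⟨q, hq, hqr⟩ := hT.exists_notMem hm hx
    obtain ⟨y, hy, hyd⟩ := exists_mem_frontier_infDist_compl_eq_dist (hT.subset hx).2 hne
    calc _ ≤ dist x y := infDist_le_dist_of_mem hy
      _ = infDist x Ωᶜ := hyd.symm
      _ ≤ dist x q := infDist_le_dist_of_mem hq
      _ ≤ r := hqr
  have hdcont : ContinuousOn (fun t => (infDist (γ t) (frontier Ω))⁻¹) (uIcc (0:ℝ) 1) := by
    apply ContinuousOn.inv₀
    · exact ((continuous_infDist_pt _).comp hγ).continuousOn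
    · intro t ht
      rw [uIcc_of_le zero_le_one] at ht
      exact (hpos _ (gΩ t ht)).ne'
  have hint : IntervalIntegrable (fun t => ‖deriv γ t‖ / infDist (γ t) (frontier Ω)) volume 0 1 := by
    simp only [div_eq_mul_inv]
    exact (dist_le_integral_deriv hK zero_le_one).1.mul_continuousOn hdcont
  have hint1 := hint.mono_set (a := 0) (b := 1) (c := 0) (d := τ) (by
    rw [uIcc_of_le hτ.1, uIcc_of_le zero_le_one]; exact Icc_subset_Icc_right hτ.2)
  have hstep1 : ∫ t in (0:ℝ)..τ, ‖deriv γ t‖ / infDist (γ t) (frontier Ω) ≤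
      ∫ t in (0:ℝ)..1, ‖deriv γ t‖ / infDist (γ t) (frontier Ω) := by
    apply intervalIntegral.integral_mono_interval le_rfl hτ.1 hτ.2 _ hint
    filter_upwards with t
    exact div_nonneg (norm_nonneg _) infDist_nonneg
  have hstep2 : ∫ t in (0:ℝ)..τ, ‖deriv γ t‖ / r ≤
      ∫ t in (0:ℝ)..τ, ‖deriv γ t‖ / infDist (γ t) (frontier Ω) := by
    apply intervalIntegral.integral_mono_on hτ.1
      ((dist_le_integral_deriv hK hτ.1).1.div_const r) hint1
    intro t ht
    have h := hstay t ht
    exact div_le_div_of_nonneg_left (norm_nonneg _) (hpos _ (hT.subset h).2) (hle _ h)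
  refine le_trans ?_ (hstep2.trans hstep1)
  rw [intervalIntegral.integral_div]
  apply div_le_div_of_nonneg_right _ hr.le
  refine le_trans ?_ (dist_le_integral_deriv hK hτ.1).2
  rw [← dist_eq_norm, ← φ.symm.dist_eq, dist_eq_norm, g0]
  refine le_trans ?_ (PiLp.norm_apply_le _ 0)
  rw [PiLp.sub_apply, Real.norm_eq_abs]
  rcases hexit with h | h
  · rw [h, zero_sub, abs_neg]; exact le_abs_self _
  · rw [h]
    refine le_trans ?_ (le_abs_self _)
    linarith

lemma IsEssentialTube.slice_volume {m : ℕ} [NeZero (m+1)]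
    {Ω : Set (EuclideanSpace ℝ (Fin (m+1)))}
    {φ : EuclideanSpace ℝ (Fin (m+1)) ≃ᵢ EuclideanSpace ℝ (Fin (m+1))} {l r c : ℝ}
    {ΩT : Set (EuclideanSpace ℝ (Fin (m+1)))} (hT : IsEssentialTube Ω φ l r c ΩT)
    {t : ℝ} (ht : t ∈ Icc (0:ℝ) l) :
    ENNReal.ofReal (c * r ^ m * (volume (ball (0 : EuclideanSpace ℝ (Fin m)) 1)).toReal) ≤
      volume {w : EuclideanSpace ℝ (Fin m) | φ (axEmb t w) ∈ ΩT} := by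
  have hiso : Isometry (fun w : EuclideanSpace ℝ (Fin m) => φ (axEmb t w)) :=
    φ.isometry.comp (axEmb_isometry t)
  have himg : φ '' stdSlice r t = (fun w : EuclideanSpace ℝ (Fin m) => φ (axEmb t w)) ''
      closedBall 0 r := by
    ext x
    constructor
    · rintro ⟨y, ⟨hy0, hyr⟩, rfl⟩
      obtain ⟨w, hw⟩ := exists_axEmb y
      rw [hy0] at hw
      refine ⟨w, ?_, by simp only [hw]⟩
      rw [hw, radial_axEmb] at hyr
      simpa using hyr
    · rintro ⟨w, hw, rfl⟩
      refine ⟨_, ⟨axEmb_zero t w, ?_⟩, rfl⟩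
      rw [radial_axEmb]
      simpa using hw
  have hsl := hT.slice_meas t ht
  have hcast : (((m+1 : ℕ) : ℝ) - 1) = (m : ℝ) := by push_cast; ring
  rw [hcast, himg] at hsl
  have hsub : ΩT ∩ (fun w : EuclideanSpace ℝ (Fin m) => φ (axEmb t w)) '' closedBall 0 r ⊆
      (fun w : EuclideanSpace ℝ (Fin m) => φ (axEmb t w)) '' {w | φ (axEmb t w) ∈ ΩT} := by
    rintro _ ⟨h1, w, hw, rfl⟩
    exact ⟨w, h1, rfl⟩
  replace hsl := hsl.trans (measure_mono hsub)
  have hm0 : (0:ℝ) ≤ m := Nat.cast_nonneg m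
  rw [hiso.hausdorffMeasure_image (Or.inl hm0), hiso.hausdorffMeasure_image (Or.inl hm0)] at hsl
  have : (μH[(m:ℝ)] : Measure (EuclideanSpace ℝ (Fin m))).IsAddHaarMeasure := by
    have h := isAddHaarMeasure_hausdorffMeasure (E := EuclideanSpace ℝ (Fin m))
    simpa using h
  rw [Measure.isAddLeftInvariant_eq_smul (μH[(m:ℝ)] : Measure (EuclideanSpace ℝ (Fin m))) volume]
    at hsl
  set κ := Measure.addHaarScalarFactor (μH[(m:ℝ)] : Measure (EuclideanSpace ℝ (Fin m))) volume
    with hκ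
  have hκ0 : κ ≠ 0 := (Measure.addHaarScalarFactor_pos_of_isAddHaarMeasure _ _).ne'
  simp only [Measure.smul_apply, ENNReal.smul_def, smul_eq_mul] at hsl
  rw [mul_left_comm, ENNReal.mul_le_mul_iff_right (by exact_mod_cast hκ0) ENNReal.coe_ne_top] at hsl
  refine le_trans (le_of_eq ?_) hsl
  rw [Measure.addHaar_closedBall _ _ hT.r_pos.le, finrank_euclideanSpace_fin,
    ENNReal.ofReal_mul (mul_nonneg hT.c_pos.le (pow_nonneg hT.r_pos.le _)),
    ENNReal.ofReal_mul hT.c_pos.le, ENNReal.ofReal_toReal measure_ball_lt_top.ne, mul_assoc]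

lemma measurePreserving_axEmb (m : ℕ) :
    MeasurePreserving (fun p : ℝ × EuclideanSpace ℝ (Fin m) => axEmb p.1 p.2)
      (volume.prod volume) volume := by
  have h1 := (volume_preserving_piFinSuccAbove (fun _ : Fin (m+1) => ℝ) 0).symm
  have h2 : MeasurePreserving (fun p : ℝ × EuclideanSpace ℝ (Fin m) => (p.1, WithLp.ofLp p.2))
      (volume.prod volume) (volume.prod volume) :=
    (MeasurePreserving.id volume).prod (PiLp.volume_preserving_ofLp (Fin m))
  have h3 := (PiLp.volume_preserving_toLp (Fin (m+1))).comp (h1.comp h2)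
  have heq : (fun p : ℝ × EuclideanSpace ℝ (Fin m) => axEmb p.1 p.2) =
      (WithLp.toLp 2 ∘ (MeasurableEquiv.piFinSuccAbove (fun _ : Fin (m+1) => ℝ) 0).symm ∘
        fun p : ℝ × EuclideanSpace ℝ (Fin m) => (p.1, WithLp.ofLp p.2)) := by
    funext p
    ext i
    refine Fin.cases ?_ (fun i => ?_) i <;>
    simp [axEmb, MeasurableEquiv.piFinSuccAbove_symm_apply, Fin.insertNthEquiv]
  rw [heq]
  exact h3

lemma isometryEquiv_measurePreserving {n : ℕ}
    (φ : EuclideanSpace ℝ (Fin n) ≃ᵢ EuclideanSpace ℝ (Fin n)) :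
    MeasurePreserving φ volume volume := by
  have : (μH[(n:ℝ)] : Measure (EuclideanSpace ℝ (Fin n))).IsAddHaarMeasure := by
    have h := isAddHaarMeasure_hausdorffMeasure (E := EuclideanSpace ℝ (Fin n))
    simpa using h
  rw [Measure.isAddLeftInvariant_eq_smul (volume : Measure (EuclideanSpace ℝ (Fin n))) μH[(n:ℝ)]]
  exact (φ.measurePreserving_hausdorffMeasure n).smul_measure _

lemma integral_part {s l r : ℝ} (hs : 1 ≤ s) (hl : 0 < l) (hr : 0 < r) :
    ∫⁻ t in Icc (0:ℝ) (l/2), ENNReal.ofReal ((t / r) ^ s) =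
      ENNReal.ofReal (r * ((l / r) ^ (s+1) / ((s+1) * 2 ^ (s+1)))) := by
  have hcont : Continuous (fun t : ℝ => (t / r) ^ s) :=
    (continuous_id.div_const r).rpow_const (fun _ => Or.inr (by linarith))
  rw [← ofReal_integral_eq_lintegral_ofReal]
  · congr 1
    rw [integral_Icc_eq_integral_Ioc, ← intervalIntegral.integral_of_le (by positivity),
      intervalIntegral.integral_comp_div (fun x => x ^ s) hr.ne', integral_rpow (Or.inl (by linarith))]
    rw [zero_div, Real.zero_rpow (by linarith), sub_zero, smul_eq_mul, div_right_comm,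
      Real.div_rpow (by positivity) (by norm_num), div_div, mul_comm ((2:ℝ) ^ (s+1))]
  · exact hcont.continuousOn.integrableOn_Icc
  · filter_upwards [ae_restrict_mem measurableSet_Icc] with t ht
    exact Real.rpow_nonneg (div_nonneg ht.1 hr.le) _

/-- Lower bound on the `L^s`-integral of the quasihyperbolic distance
over the component `Ω_T` of an essential tube. -/
theorem tube_lower_bound {n : ℕ} [NeZero n] (hn : 2 ≤ n) (s : ℝ) (hs : 1 ≤ s)
    (Ω : Set (EuclideanSpace ℝ (Fin n))) (hΩop : IsOpen Ω) (hΩconn : IsConnected Ω)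
    (φ : EuclideanSpace ℝ (Fin n) ≃ᵢ EuclideanSpace ℝ (Fin n)) (l r c : ℝ)
    (ΩT : Set (EuclideanSpace ℝ (Fin n))) (hT : IsEssentialTube Ω φ l r c ΩT)
    (z₀ : EuclideanSpace ℝ (Fin n)) (hz₀ : z₀ ∈ Ω) (hz₀T : z₀ ∉ ΩT) :
    ENNReal.ofReal
        ((volume (Metric.ball (0 : EuclideanSpace ℝ (Fin (n-1))) 1)).toReal
          / ((s+1) * 2 ^ (s+1)) * c * r ^ n * (l / r) ^ (s+1)) ≤
      ∫⁻ z in ΩT, ENNReal.ofReal (qhDist Ω z z₀ ^ s) := by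
  obtain ⟨m, rfl⟩ : ∃ m, n = m + 1 := ⟨n - 1, by omega⟩
  have hm : 1 ≤ m := by omega
  have hl := hT.l_pos
  have hr := hT.r_pos
  have hc := hT.c_pos
  change ENNReal.ofReal
        ((volume (Metric.ball (0 : EuclideanSpace ℝ (Fin m)) 1)).toReal
          / ((s+1) * 2 ^ (s+1)) * c * r ^ (m+1) * (l / r) ^ (s+1)) ≤ _
  set V := (volume (Metric.ball (0 : EuclideanSpace ℝ (Fin m)) 1)).toReal with hV
  set g : ℝ → ℝ≥0∞ := (Icc (0:ℝ) (l/2)).indicator (fun t => ENNReal.ofReal ((t / r) ^ s)) with hg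
  have hgm : Measurable g := by
    refine Measurable.indicator ?_ measurableSet_Icc
    fun_prop
  have hTm : MeasurableSet ΩT := hT.measurableSet hΩop
  have hcoord : Measurable (fun y : EuclideanSpace ℝ (Fin (m+1)) => y 0) := by fun_prop
  have h1 : ∫⁻ z in ΩT, g ((φ.symm z) 0) ≤ ∫⁻ z in ΩT, ENNReal.ofReal (qhDist Ω z z₀ ^ s) := by
    refine setLIntegral_mono' hTm (fun z hz => ?_)
    by_cases h : (φ.symm z) 0 ∈ Icc (0:ℝ) (l/2)
    · rw [hg, indicator_of_mem h]
      apply ENNReal.ofReal_le_ofReal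
      exact Real.rpow_le_rpow (div_nonneg h.1 hr.le)
        (hT.qhDist_ge hm hΩop hΩconn hz hz₀ hz₀T h.2) (by linarith)
    · rw [hg, indicator_of_notMem h]
      exact zero_le
  refine le_trans ?_ h1
  set F : EuclideanSpace ℝ (Fin (m+1)) → ℝ≥0∞ := ΩT.indicator (fun z => g ((φ.symm z) 0)) with hF
  have hFm : Measurable F :=
    (hgm.comp (hcoord.comp φ.symm.continuous.measurable)).indicator hTm
  have hφe := isometryEquiv_measurePreserving φ
  have hae := measurePreserving_axEmb m
  rw [← lintegral_indicator hTm, ← hF, ← hφe.lintegral_comp hFm,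
    ← hae.lintegral_comp (f := fun y => F (φ y)) (hFm.comp hφe.measurable),
    lintegral_prod (fun p : ℝ × EuclideanSpace ℝ (Fin m) => F (φ (axEmb p.1 p.2))) ((hFm.comp hφe.measurable).comp hae.measurable).aemeasurable]
  have h2 : ∀ t : ℝ, (Icc (0:ℝ) (l/2)).indicator
      (fun t => ENNReal.ofReal ((t / r) ^ s) * ENNReal.ofReal (c * r ^ m * V)) t ≤
      ∫⁻ w : EuclideanSpace ℝ (Fin m), F (φ (axEmb t w)) := by
    intro t
    by_cases h : t ∈ Icc (0:ℝ) (l/2)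
    · rw [indicator_of_mem h]
      have hSm : MeasurableSet {w : EuclideanSpace ℝ (Fin m) | φ (axEmb t w) ∈ ΩT} :=
        (φ.continuous.comp (axEmb_isometry t).continuous).measurable hTm
      have h3 : ∀ w : EuclideanSpace ℝ (Fin m), F (φ (axEmb t w)) =
          {w : EuclideanSpace ℝ (Fin m) | φ (axEmb t w) ∈ ΩT}.indicator
            (fun _ => ENNReal.ofReal ((t / r) ^ s)) w := by
        intro w
        by_cases hw : φ (axEmb t w) ∈ ΩT
        · rw [hF, indicator_of_mem hw, indicator_of_mem (by exact hw), φ.symm_apply_apply,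
            axEmb_zero, hg, indicator_of_mem h]
        · rw [hF, indicator_of_notMem hw, indicator_of_notMem (by exact hw)]
      rw [lintegral_congr h3, lintegral_indicator hSm, setLIntegral_const]
      exact mul_le_mul_right (hT.slice_volume ⟨h.1, by linarith [h.2]⟩) _
    · rw [indicator_of_notMem h]
      exact zero_le
  refine le_trans (le_of_eq ?_) (lintegral_mono h2)
  rw [lintegral_indicator measurableSet_Icc, lintegral_mul_const _ (by fun_prop),
    integral_part hs hl hr, ← ENNReal.ofReal_mul (by positivity)]
  congr 1
  rw [pow_succ]
  ring
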